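/- arXiv:1906.00187 — 2 statements merged into one kernel-verified Lean document; each statement's English description precedes it below -/
import Mathlib

section
/- (Mehler formula extended to the complex plane.) For every real λ with 0 < λ < 1 and all t, z ∈ ℂ, the series ∑_{m=0}^∞ (λ^m/(2^m m!)) H_m(t) H_m(z) converges and equals (1 − λ²)^{−1/2} · exp((−λ²(t² + z²) + 2λtz)/(1 − λ²)). -/
open MeasureTheory Complex

/-- Physicists' Hermite polynomial `H_m`, as an entire function on `ℂ`:
`H_m(z) = (-1)^m e^{z²} (d/dz)^m e^{-z²}`. -/
noncomputable def Hpoly (m : ℕ) (z : ℂ) : ℂ :=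
  (-1 : ℂ) ^ m * Complex.exp (z ^ 2) * iteratedDeriv m (fun w => Complex.exp (-w ^ 2)) z

open ProbabilityTheory
open scoped NNReal

/-!
Let `X` and `Y` be independent centred Gaussian variables of variance `2`, so that
`𝔼 exp (i z X) = exp (-z²)`. Differentiating `m` times in `z` gives
`H_m(z) = exp (z²) 𝔼 [(-i X)^m exp (i z X)]`. The product `H_m(t) H_m(z)` is then an expectation of
`(-X Y)^m exp (i t X + i z Y)`, and summing the exponential series under the expectation turns the
left-hand side into the Gaussian integral
`exp (t² + z²) 𝔼 exp (-l X Y / 2 + i t X + i z Y)`, which is computed one variable at a time.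
The interchange is legitimate because `|l X Y / 2| ≤ |l| (X² + Y²) / 4`, and
`exp (|l| X² / 4)` is integrable for `|l| < 1`.
-/

section ExponentialSeries

variable {α : Type*} [MeasurableSpace α] {μ : Measure α} {g h : α → ℂ}

lemma hasSum_integral_pow_div_factorial_mul (hg : AEStronglyMeasurable g μ)
    (hh : AEStronglyMeasurable h μ) (hint : Integrable (fun a => Real.exp ‖g a‖ * ‖h a‖) μ) :
    HasSum (fun n : ℕ => ∫ a, g a ^ n / n.factorial * h a ∂μ) (∫ a, exp (g a) * h a ∂μ) := by
  have hasSum_bound (a : α) :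
      HasSum (fun n : ℕ => ‖g a‖ ^ n / n.factorial * ‖h a‖) (Real.exp ‖g a‖ * ‖h a‖) := by
    rw [Real.exp_eq_exp_ℝ]
    exact (NormedSpace.expSeries_div_hasSum_exp ‖g a‖).mul_right _
  refine hasSum_integral_of_dominated_convergence
    (fun n a => ‖g a‖ ^ n / n.factorial * ‖h a‖)
    (fun n => ((hg.pow n).mul_const _).mul hh) (fun n => ae_of_all _ fun a => by simp)
    (ae_of_all _ fun a => (hasSum_bound a).summable) ?_ (ae_of_all _ fun a => ?_)
  · simpa only [(hasSum_bound _).tsum_eq] using hint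
  · rw [exp_eq_exp_ℂ]
    exact (NormedSpace.expSeries_div_hasSum_exp (g a)).mul_right _

end ExponentialSeries

section ComplexPowers

lemma ofReal_sqrt_eq_cpow {r : ℝ} (hr : 0 ≤ r) : (√r : ℂ) = (r : ℂ) ^ (1 / 2 : ℂ) := by
  rw [Real.sqrt_eq_rpow, ofReal_cpow hr]
  norm_num

lemma one_div_ofReal_sqrt_eq_cpow {r : ℝ} (hr : 0 ≤ r) :
    (1 / √r : ℂ) = (r : ℂ) ^ (-(1 / 2) : ℂ) := by
  rw [ofReal_sqrt_eq_cpow hr, cpow_neg, one_div]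

lemma ofReal_mul_inv_cpow_half {r : ℝ} (hr : 0 < r) {w : ℂ} (hw : 0 < w.re) :
    (r * w⁻¹) ^ (1 / 2 : ℂ) = √r * w ^ (-(1 / 2) : ℂ) := by
  have hslit : w ∈ slitPlane := .inl hw
  have hr' : (r : ℂ) ≠ 0 := ofReal_ne_zero.2 hr.ne'
  have hw' : w⁻¹ ≠ 0 := inv_ne_zero (slitPlane_ne_zero hslit)
  rw [ofReal_sqrt_eq_cpow hr.le, cpow_neg, ← inv_cpow _ _ (slitPlane_arg_ne_pi hslit),
    cpow_def_of_ne_zero (mul_ne_zero hr' hw'), cpow_def_of_ne_zero hr', cpow_def_of_ne_zero hw',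
    log_ofReal_mul hr hw', ofReal_log hr.le, ← exp_add, add_mul]

lemma one_sub_sq_ne_zero {w : ℂ} (hw : ‖w‖ < 1) : 1 - w ^ 2 ≠ 0 := by
  refine sub_ne_zero.2 fun h => ?_
  have : ‖w ^ 2‖ < 1 := by simpa using pow_lt_one₀ (norm_nonneg w) hw two_ne_zero
  simp [← h] at this

end ComplexPowers

section GaussianIntegrals

variable {v : ℝ≥0}

lemma integral_cexp_mul_sq_add_mul_gaussianReal_eq_integral_volume (hv : v ≠ 0) (c a : ℂ) :
    ∫ x : ℝ, exp (c * x ^ 2 + a * x) ∂gaussianReal 0 v =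
      (√(2 * Real.pi * v) : ℂ)⁻¹ * ∫ x : ℝ, exp ((c - 1 / (2 * v)) * x ^ 2 + a * x) := by
  rw [integral_gaussianReal_eq_integral_smul hv, ← integral_const_mul]
  congr with x
  rw [gaussianPDFReal, real_smul]
  push_cast
  rw [mul_assoc, ← exp_add]
  ring_nf

lemma integral_cexp_mul_sq_add_mul_gaussianReal {c : ℂ} (hc : 2 * v * c.re < 1) (a : ℂ) :
    ∫ x : ℝ, exp (c * x ^ 2 + a * x) ∂gaussianReal 0 v =
      (1 - 2 * v * c) ^ (-(1 / 2) : ℂ) * exp (v * a ^ 2 / (2 * (1 - 2 * v * c))) := by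
  obtain rfl | hv := eq_or_ne v 0
  · simp
  have hv_pos : (0 : ℝ) < v := NNReal.coe_pos.2 (pos_iff_ne_zero.2 hv)
  have hv_ne : (v : ℂ) ≠ 0 := by exact_mod_cast hv_pos.ne'
  have hw : 0 < (1 - 2 * v * c).re := by simpa [mul_assoc] using hc
  have hw_ne : 1 - 2 * v * c ≠ 0 := fun h => by simp [h] at hw
  have hexponent : c - 1 / (2 * v) = -((1 - 2 * v * c) / (2 * v)) := by
    field_simp
    ring
  have hexponent_re : (c - 1 / (2 * v)).re < 0 := by
    rw [hexponent, show (2 * v : ℂ) = (2 * v : ℝ) by push_cast; rfl, neg_re, div_ofReal_re]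
    exact neg_neg_of_pos (by push_cast; positivity)
  have hquadratic := integral_cexp_quadratic hexponent_re a 0
  simp only [add_zero] at hquadratic
  have hbase : (Real.pi : ℂ) / -(c - 1 / (2 * v)) =
      (2 * Real.pi * v : ℝ) * (1 - 2 * v * c)⁻¹ := by
    rw [hexponent]
    push_cast
    field_simp
  have hsqrt : (√(2 * Real.pi * v) : ℂ) ≠ 0 := by
    exact_mod_cast (Real.sqrt_pos.2 (by positivity)).ne'
  rw [integral_cexp_mul_sq_add_mul_gaussianReal_eq_integral_volume hv,
    hquadratic, hbase, ofReal_mul_inv_cpow_half (by positivity) hw,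
    ← mul_assoc, inv_mul_cancel_left₀ hsqrt, hexponent]
  congr 2
  field_simp
  ring

lemma integrable_exp_mul_sq_add_mul_gaussianReal {c : ℝ} (hc : 2 * v * c < 1) (a : ℝ) :
    Integrable (fun x => Real.exp (c * x ^ 2 + a * x)) (gaussianReal 0 v) := by
  have hne : (1 - 2 * v * c : ℂ) ≠ 0 := by exact_mod_cast (sub_pos.2 hc).ne'
  have hint : Integrable (fun x : ℝ => exp (c * x ^ 2 + a * x)) (gaussianReal 0 v) := by
    refine .of_integral_ne_zero ?_
    rw [integral_cexp_mul_sq_add_mul_gaussianReal (by simpa using hc)]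
    exact mul_ne_zero (cpow_ne_zero_iff.2 (.inl hne)) (exp_ne_zero _)
  simpa [norm_exp, ← ofReal_pow] using hint.norm

lemma integrable_exp_norm_bilinear_gaussianReal_prod {b : ℂ} (hb : v * ‖b‖ < 1) (a₁ a₂ : ℂ) :
    Integrable
      (fun p : ℝ × ℝ => Real.exp ‖b * p.1 * p.2‖ * ‖exp (a₁ * p.1) * exp (a₂ * p.2)‖)
      ((gaussianReal 0 v).prod (gaussianReal 0 v)) := by
  have hc : 2 * v * (‖b‖ / 2) < 1 := by linarith
  refine ((integrable_exp_mul_sq_add_mul_gaussianReal hc a₁.re).mul_prod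
    (integrable_exp_mul_sq_add_mul_gaussianReal hc a₂.re)).mono' (by fun_prop)
    (ae_of_all _ fun ⟨x, y⟩ => ?_)
  have hxy : |x| * |y| ≤ (x ^ 2 + y ^ 2) / 2 := by
    linarith [two_mul_le_add_sq |x| |y|, sq_abs x, sq_abs y]
  simp only [norm_mul, norm_exp, norm_real, Real.norm_eq_abs, Real.abs_exp,
    ← Real.exp_add, re_mul_ofReal]
  rw [Real.exp_le_exp]
  linarith [mul_le_mul_of_nonneg_left hxy (norm_nonneg b)]

lemma integrable_cexp_bilinear_gaussianReal_prod {b : ℂ} (hb : v * ‖b‖ < 1) (a₁ a₂ : ℂ) :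
    Integrable (fun p : ℝ × ℝ => exp (b * p.1 * p.2) * (exp (a₁ * p.1) * exp (a₂ * p.2)))
      ((gaussianReal 0 v).prod (gaussianReal 0 v)) := by
  refine (integrable_exp_norm_bilinear_gaussianReal_prod hb a₁ a₂).mono' (by fun_prop)
    (ae_of_all _ fun p => ?_)
  rw [norm_mul]
  gcongr
  exact norm_exp_le_exp_norm _

lemma integral_cexp_bilinear_gaussianReal (b a₁ a₂ : ℂ) (y : ℝ) :
    ∫ x : ℝ, exp (b * x * y) * (exp (a₁ * x) * exp (a₂ * y)) ∂gaussianReal 0 v =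
      exp (v * a₁ ^ 2 / 2) * exp (v * b ^ 2 / 2 * y ^ 2 + (a₂ + v * b * a₁) * y) := calc
  _ = exp (a₂ * y) * complexMGF id (gaussianReal 0 v) (b * y + a₁) := by
    rw [complexMGF, ← integral_const_mul]
    congr with x
    simp only [id, ← exp_add]
    ring_nf
  _ = _ := by
    rw [complexMGF_id_gaussianReal, ← exp_add, ← exp_add]
    push_cast
    ring_nf

lemma integral_cexp_bilinear_gaussianReal_prod {b : ℂ} (hb : v * ‖b‖ < 1) (a₁ a₂ : ℂ) :
    ∫ p : ℝ × ℝ, exp (b * p.1 * p.2) * (exp (a₁ * p.1) * exp (a₂ * p.2))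
        ∂(gaussianReal 0 v).prod (gaussianReal 0 v) =
      (1 - (v * b) ^ 2) ^ (-(1 / 2) : ℂ) *
        exp ((v * (a₁ ^ 2 + a₂ ^ 2) / 2 + v ^ 2 * b * a₁ * a₂) / (1 - (v * b) ^ 2)) := by
  have hvb : ‖v * b‖ < 1 := by simpa using hb
  have hc : 2 * v * (v * b ^ 2 / 2 : ℂ).re < 1 := calc
    2 * v * (v * b ^ 2 / 2 : ℂ).re = ((v * b) ^ 2).re := by
      rw [show (v * b) ^ 2 = (2 * v : ℝ) * (v * b ^ 2 / 2) by push_cast; ring, re_ofReal_mul]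
    _ ≤ ‖v * b‖ ^ 2 := (re_le_norm _).trans_eq (norm_pow _ _)
    _ < 1 := pow_lt_one₀ (norm_nonneg _) hvb two_ne_zero
  have hne := one_sub_sq_ne_zero hvb
  rw [integral_prod_symm _ (integrable_cexp_bilinear_gaussianReal_prod hb a₁ a₂)]
  simp only [integral_cexp_bilinear_gaussianReal]
  rw [integral_const_mul, integral_cexp_mul_sq_add_mul_gaussianReal hc,
    show 2 * v * (v * b ^ 2 / 2) = (v * b) ^ 2 by ring, mul_left_comm, ← exp_add]
  congr 2
  rw [mul_pow] at hne ⊢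
  field_simp
  ring

end GaussianIntegrals

section Hermite

lemma iteratedDeriv_cexp_neg_sq (m : ℕ) (z : ℂ) :
    iteratedDeriv m (fun w : ℂ => exp (-w ^ 2)) z =
      I ^ m * ∫ x : ℝ, (x : ℂ) ^ m * exp (I * z * x) ∂gaussianReal 0 2 := by
  have hmgf : complexMGF id (gaussianReal 0 2) = fun w => exp (w ^ 2) := by
    ext w
    simp [complexMGF_id_gaussianReal]
  have hrot : (fun w : ℂ => exp (-w ^ 2)) = fun w => complexMGF id (gaussianReal 0 2) (I * w) := by
    simp [hmgf, mul_pow]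
  have hsmooth : ContDiff ℂ m (complexMGF id (gaussianReal 0 2)) := by
    rw [hmgf]
    fun_prop
  rw [hrot, iteratedDeriv_comp_const_mul hsmooth]
  beta_reduce
  rw [iteratedDeriv_complexMGF (by simp)]
  rfl

lemma Hpoly_eq_integral (m : ℕ) (z : ℂ) :
    Hpoly m z =
      exp (z ^ 2) * ∫ x : ℝ, (-I * x) ^ m * exp (I * z * x) ∂gaussianReal 0 2 := by
  simp only [Hpoly, iteratedDeriv_cexp_neg_sq, mul_pow, mul_assoc, integral_const_mul]
  rw [neg_pow]
  ring

lemma Hpoly_mul_Hpoly_eq_integral (m : ℕ) (t z : ℂ) :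
    Hpoly m t * Hpoly m z = exp (t ^ 2 + z ^ 2) *
      ∫ p : ℝ × ℝ, (-(p.1 * p.2 : ℂ)) ^ m * (exp (I * t * p.1) * exp (I * z * p.2))
        ∂(gaussianReal 0 2).prod (gaussianReal 0 2) := by
  rw [Hpoly_eq_integral, Hpoly_eq_integral, mul_mul_mul_comm, ← exp_add, ← integral_prod_mul]
  congr with p
  rw [mul_mul_mul_comm, ← mul_pow, mul_mul_mul_comm (-I), neg_mul_neg, I_mul_I, neg_one_mul]

lemma hasSum_Hpoly_mul_Hpoly {x : ℂ} (hx : ‖x‖ < 1) (t z : ℂ) :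
    HasSum (fun m : ℕ => x ^ m / (2 ^ m * m.factorial) * Hpoly m t * Hpoly m z)
      (exp (t ^ 2 + z ^ 2) *
        ∫ p : ℝ × ℝ, exp (-x / 2 * p.1 * p.2) * (exp (I * t * p.1) * exp (I * z * p.2))
          ∂(gaussianReal 0 2).prod (gaussianReal 0 2)) := by
  have hb : ((2 : ℝ≥0) : ℝ) * ‖-x / 2‖ < 1 := by simpa [mul_div_assoc'] using hx
  have hsum := (hasSum_integral_pow_div_factorial_mul (by fun_prop) (by fun_prop)
    (integrable_exp_norm_bilinear_gaussianReal_prod hb (I * t) (I * z))).mul_left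
      (exp (t ^ 2 + z ^ 2))
  convert! hsum using 2 with m
  rw [mul_assoc, Hpoly_mul_Hpoly_eq_integral, mul_left_comm, ← integral_const_mul]
  congr with p
  rw [show -x / 2 * p.1 * p.2 = x / 2 * -(p.1 * p.2) by ring, mul_pow, div_pow]
  ring

theorem statement5_general {x : ℂ} (hx : ‖x‖ < 1) (t z : ℂ) :
    HasSum (fun m : ℕ => x ^ m / (2 ^ m * m.factorial) * Hpoly m t * Hpoly m z)
      ((1 - x ^ 2) ^ (-(1 / 2) : ℂ) *
        exp ((-x ^ 2 * (t ^ 2 + z ^ 2) + 2 * x * t * z) / (1 - x ^ 2))) := by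
  have hb : ((2 : ℝ≥0) : ℝ) * ‖-x / 2‖ < 1 := by simpa [mul_div_assoc'] using hx
  have hne : 1 - x ^ 2 ≠ 0 := one_sub_sq_ne_zero hx
  convert! hasSum_Hpoly_mul_Hpoly hx t z using 1
  rw [integral_cexp_bilinear_gaussianReal_prod hb, mul_left_comm, ← exp_add]
  have hsq : (((2 : ℝ≥0) : ℝ) * (-x / 2) : ℂ) ^ 2 = x ^ 2 := by push_cast; ring
  rw [hsq]
  congr 2
  push_cast
  field_simp
  simp only [I_sq]
  ring

end Hermite

/-- Mehler's formula for Hermite polynomials, extended to the complex plane. -/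
theorem statement5 (l : ℝ) (hl0 : 0 < l) (hl1 : l < 1) (t z : ℂ) :
    HasSum (fun m : ℕ => ((l : ℂ) ^ m / ((2 : ℂ) ^ m * m.factorial)) * Hpoly m t * Hpoly m z)
      ((1 / (Real.sqrt (1 - l ^ 2)) : ℂ) *
        Complex.exp ((-(l : ℂ) ^ 2 * (t ^ 2 + z ^ 2) + 2 * (l : ℂ) * t * z)
          / (1 - (l : ℂ) ^ 2))) := by
  rw [one_div_ofReal_sqrt_eq_cpow (by nlinarith), ofReal_sub, ofReal_one, ofReal_pow]
  exact statement5_general (by rwa [norm_real, Real.norm_of_nonneg hl0.le]) t z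
end

section
/- For every t ∈ ℝ and z ∈ ℂ, the Segal–Bargmann kernel admits the expansion B_s(t,z) = ∑_{m=0}^∞ f_m(t) ψ^s_m(z), with the series convergent, where B_s(t,z) = ((1 − s²)/(2πs√(sπ)))^{1/2} · exp(−t²/(2s) − z²/(2s) + (√(1 − s²)/s) t z). -/
open MeasureTheory Complex

/-- `ψ^s_m(z) = ((1-s)/(π√s))^{1/2} ((1-s)/(1+s))^{m/2} (2^m m!)^{-1/2} e^{-z²/2} H_m(z)`. -/
noncomputable def psiS (s : ℝ) (m : ℕ) (z : ℂ) : ℂ :=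
  (Real.sqrt ((1 - s) / (Real.pi * Real.sqrt s)) : ℂ)
    * (Real.sqrt (((1 - s) / (1 + s)) ^ m) : ℂ)
    * (1 / (Real.sqrt ((2 : ℝ) ^ m * m.factorial) : ℂ))
    * Complex.exp (-z ^ 2 / 2) * Hpoly m z

/-- Hermite functions `f_m(t) = (2^m m! √π)^{-1/2} e^{-t²/2} H_m(t)` on `ℝ`. -/
noncomputable def fHerm (m : ℕ) (t : ℝ) : ℂ :=
  (1 / (Real.sqrt ((2 : ℝ) ^ m * m.factorial * Real.sqrt Real.pi)) : ℂ)
    * Complex.exp (-(t : ℂ) ^ 2 / 2) * Hpoly m (t : ℂ)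

/-- Segal–Bargmann kernel
`B_s(t,z) = ((1-s²)/(2πs√(sπ)))^{1/2} exp(-t²/(2s) - z²/(2s) + (√(1-s²)/s) t z)`. -/
noncomputable def Bker (s : ℝ) (t z : ℂ) : ℂ :=
  (Real.sqrt ((1 - s ^ 2) / (2 * Real.pi * s * Real.sqrt (s * Real.pi))) : ℂ)
    * Complex.exp (-t ^ 2 / (2 * s) - z ^ 2 / (2 * s)
        + ((Real.sqrt (1 - s ^ 2) / s : ℝ) : ℂ) * t * z)

/-!
Multiplying Mehler's kernel by `e^{-(x² + z²)/2}` and putting `w² = (1 - s)/(1 + s)`, so that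
`1 - w² = 2s/(1 + s)`, yields `B_s(x, z)` up to a constant; the theorem is therefore Mehler's
formula `∑ H_n(x) H_n(y) wⁿ/(2ⁿ n!) = (1 - w²)^{-1/2} exp((2wxy - w²(x² + y²))/(1 - w²))`.
The right-hand side is holomorphic in `|w| < 1`, so only its Taylor coefficients at `0` matter.
Let `M` be the kernel and `T(x, y) = 2(x - wy) M/(1 - w²)`, the candidate for the sum
`∑ H_{n+1}(x) H_n(y) wⁿ/(2ⁿ n!)`. The relations `T(x, y) = 2xM - w T(y, x)` and
`M' = w (wM)' + (y - wx) T(x, y)`, together with `M = 1` at `w = 0`, determine all coefficients of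
`M` and `T`, and the three-term recurrence of the Hermite polynomials shows that their products
solve the same recursion.
-/

section IteratedDeriv

variable {𝕜 : Type*} [NontriviallyNormedField 𝕜]

lemma iteratedDeriv_succ_id_mul {n : ℕ} {f : 𝕜 → 𝕜} {z : 𝕜} (hf : ContDiffAt 𝕜 (n + 1 : ℕ) f z) :
    iteratedDeriv (n + 1) (fun w => w * f w) z
      = z * iteratedDeriv (n + 1) f z + (n + 1) * iteratedDeriv n f z := by
  have leibniz := iteratedDeriv_fun_mul (contDiffAt_id (𝕜 := 𝕜) (x := z)) hf
  simp only [id_eq] at leibniz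
  rw [leibniz, Finset.sum_range_succ', Finset.sum_range_succ', Finset.sum_eq_zero]
  · simp only [zero_add, Nat.choose_one_right, Nat.cast_add, Nat.cast_one, iteratedDeriv_id,
      one_ne_zero, ↓reduceIte, mul_one, add_tsub_cancel_right, Nat.choose_zero_right, one_mul,
      tsub_zero]
    ring
  · intro i _
    simp [iteratedDeriv_id]

lemma iteratedDeriv_succ_id_mul_zero {n : ℕ} {f : 𝕜 → 𝕜} (hf : ContDiffAt 𝕜 (n + 1 : ℕ) f 0) :
    iteratedDeriv (n + 1) (fun w => w * f w) 0 = (n + 1) * iteratedDeriv n f 0 := by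
  rw [iteratedDeriv_succ_id_mul hf, zero_mul, zero_add]

end IteratedDeriv

lemma deriv_cexp_neg_sq :
    deriv (fun w : ℂ => exp (-w ^ 2)) = fun w => -2 * (w * exp (-w ^ 2)) := by
  funext w
  have h : HasDerivAt (fun v : ℂ => exp (-v ^ 2)) (exp (-w ^ 2) * -(2 * w)) w := by
    simpa using (hasDerivAt_pow 2 w).fun_neg.cexp
  rw [h.deriv]
  ring

lemma Hpoly_zero (z : ℂ) : Hpoly 0 z = 1 := by
  simp [Hpoly, ← exp_add]

lemma Hpoly_one (z : ℂ) : Hpoly 1 z = 2 * z := by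
  have cancel : exp (z ^ 2) * exp (-z ^ 2) = 1 := by simp [← exp_add]
  simp only [Hpoly, iteratedDeriv_one, deriv_cexp_neg_sq]
  linear_combination 2 * z * cancel

lemma Hpoly_add_two (n : ℕ) (z : ℂ) :
    Hpoly (n + 2) z = 2 * z * Hpoly (n + 1) z - 2 * (n + 1) * Hpoly n z := by
  have gaussian_contDiff : ContDiff ℂ (n + 1 : ℕ) fun w : ℂ => exp (-w ^ 2) := by fun_prop
  simp only [Hpoly]
  rw [iteratedDeriv_succ', deriv_cexp_neg_sq, iteratedDeriv_const_mul_field,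
    iteratedDeriv_succ_id_mul gaussian_contDiff.contDiffAt]
  ring

/-- Mehler's kernel, the generating function `∑ H_n(x) H_n(y) wⁿ / (2ⁿ n!)` in closed form.
The power is the principal branch, which is holomorphic in `w` for `|w| < 1`. -/
noncomputable def mehlerKernel (x y w : ℂ) : ℂ :=
  (1 - w ^ 2) ^ (-1 / 2 : ℂ) * exp ((2 * w * (x * y) - w ^ 2 * (x ^ 2 + y ^ 2)) / (1 - w ^ 2))

/-- The generating function `∑ H_{n+1}(x) H_n(y) wⁿ / (2ⁿ n!)` in closed form. It is the image of
`mehlerKernel` under the raising operator `2x - ∂/∂x`. -/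
noncomputable def raisedMehlerKernel (x y w : ℂ) : ℂ :=
  2 * (x - w * y) / (1 - w ^ 2) * mehlerKernel x y w

lemma mehlerKernel_comm (x y w : ℂ) : mehlerKernel x y w = mehlerKernel y x w := by
  simp only [mehlerKernel, mul_comm x y, add_comm (x ^ 2)]

lemma mehlerKernel_zero (x y : ℂ) : mehlerKernel x y 0 = 1 := by
  simp [mehlerKernel]

lemma raisedMehlerKernel_zero (x y : ℂ) : raisedMehlerKernel x y 0 = 2 * x := by
  simp [raisedMehlerKernel, mehlerKernel_zero]

lemma raisedMehlerKernel_eq_sub (x y : ℂ) {w : ℂ} (hw : 1 - w ^ 2 ≠ 0) :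
    raisedMehlerKernel x y w = 2 * x * mehlerKernel x y w - w * raisedMehlerKernel y x w := by
  rw [raisedMehlerKernel, raisedMehlerKernel, mehlerKernel_comm y x]
  field_simp
  ring

lemma hasDerivAt_mehlerKernel (x y : ℂ) {w : ℂ} (hw : 1 - w ^ 2 ∈ slitPlane) :
    HasDerivAt (mehlerKernel x y)
      (((y - w * x) * raisedMehlerKernel x y w + w * mehlerKernel x y w) / (1 - w ^ 2)) w := by
  have hne : 1 - w ^ 2 ≠ 0 := slitPlane_ne_zero hw
  have hden : HasDerivAt (fun v : ℂ => 1 - v ^ 2) (-(2 * w)) w := by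
    simpa using (hasDerivAt_pow 2 w).const_sub 1
  have hnum : HasDerivAt (fun v : ℂ => 2 * v * (x * y) - v ^ 2 * (x ^ 2 + y ^ 2))
      (2 * (x * y) - 2 * w * (x ^ 2 + y ^ 2)) w := by
    simpa using (((hasDerivAt_id' w).const_mul 2).mul_const (x * y)).fun_sub
      ((hasDerivAt_pow 2 w).mul_const (x ^ 2 + y ^ 2))
  have hpow := hden.cpow_const (c := -1 / 2) hw
  refine (hpow.fun_mul (hnum.fun_div hden hne).cexp).congr_deriv ?_
  rw [raisedMehlerKernel, mehlerKernel, cpow_sub _ _ hne, cpow_one]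
  field_simp
  ring

lemma deriv_mehlerKernel_eq (x y : ℂ) {w : ℂ} (hw : 1 - w ^ 2 ∈ slitPlane) :
    deriv (mehlerKernel x y) w = w * deriv (fun v => v * mehlerKernel x y v) w
      + (y * raisedMehlerKernel x y w - x * (w * raisedMehlerKernel x y w)) := by
  have hne : 1 - w ^ 2 ≠ 0 := slitPlane_ne_zero hw
  have hM := hasDerivAt_mehlerKernel x y hw
  rw [((hasDerivAt_id' w).fun_mul hM).deriv, hM.deriv]
  field_simp
  ring

lemma deriv_mehlerKernel_zero (x y : ℂ) : deriv (mehlerKernel x y) 0 = 2 * x * y := by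
  rw [deriv_mehlerKernel_eq x y (by simp), raisedMehlerKernel_zero]
  ring

lemma one_sub_sq_mem_slitPlane {w : ℂ} (hw : ‖w‖ < 1) : 1 - w ^ 2 ∈ slitPlane := by
  have hw2 : ‖-w ^ 2‖ < 1 := by
    rw [norm_neg, norm_pow]
    exact pow_lt_one₀ (norm_nonneg w) hw two_ne_zero
  simpa [sub_eq_add_neg] using mem_slitPlane_of_norm_lt_one hw2

lemma eventually_one_sub_sq_mem_slitPlane : ∀ᶠ w : ℂ in nhds 0, 1 - w ^ 2 ∈ slitPlane := by
  filter_upwards [Metric.ball_mem_nhds (0 : ℂ) one_pos] with w hw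
  exact one_sub_sq_mem_slitPlane (mem_ball_zero_iff.mp hw)

lemma differentiableOn_mehlerKernel (x y : ℂ) :
    DifferentiableOn ℂ (mehlerKernel x y) (Metric.ball 0 1) := by
  intro w hw
  have hw1 : 1 - w ^ 2 ∈ slitPlane := one_sub_sq_mem_slitPlane (mem_ball_zero_iff.mp hw)
  exact (hasDerivAt_mehlerKernel x y hw1).differentiableAt.differentiableWithinAt

lemma analyticAt_mehlerKernel (x y : ℂ) : AnalyticAt ℂ (mehlerKernel x y) 0 :=
  (differentiableOn_mehlerKernel x y).analyticAt (Metric.ball_mem_nhds 0 one_pos)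

lemma analyticAt_raisedMehlerKernel (x y : ℂ) : AnalyticAt ℂ (raisedMehlerKernel x y) 0 := by
  have hden : (1 - 0 ^ 2 : ℂ) ≠ 0 := by norm_num
  have hM := analyticAt_mehlerKernel x y
  unfold raisedMehlerKernel
  fun_prop (disch := exact hden)

lemma iteratedDeriv_succ_raisedMehlerKernel (x y : ℂ) (n : ℕ) :
    iteratedDeriv (n + 1) (raisedMehlerKernel x y) 0
      = 2 * x * iteratedDeriv (n + 1) (mehlerKernel x y) 0
        - (n + 1) * iteratedDeriv n (raisedMehlerKernel y x) 0 := by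
  have hM := analyticAt_mehlerKernel x y
  have hT := analyticAt_raisedMehlerKernel y x
  have hxM : AnalyticAt ℂ (fun w => 2 * x * mehlerKernel x y w) 0 := by fun_prop
  have hwT : AnalyticAt ℂ (fun w => w * raisedMehlerKernel y x w) 0 := by fun_prop
  have relation : raisedMehlerKernel x y =ᶠ[nhds 0] fun w =>
      2 * x * mehlerKernel x y w - w * raisedMehlerKernel y x w :=
    eventually_one_sub_sq_mem_slitPlane.mono fun w hw =>
      raisedMehlerKernel_eq_sub x y (slitPlane_ne_zero hw)
  rw [relation.iteratedDeriv_eq, iteratedDeriv_fun_sub hxM.contDiffAt hwT.contDiffAt,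
    iteratedDeriv_const_mul_field, iteratedDeriv_succ_id_mul_zero hT.contDiffAt]

lemma iteratedDeriv_add_two_mehlerKernel (x y : ℂ) (n : ℕ) :
    iteratedDeriv (n + 2) (mehlerKernel x y) 0
      = (n + 1) ^ 2 * iteratedDeriv n (mehlerKernel x y) 0
        + (y * iteratedDeriv (n + 1) (raisedMehlerKernel x y) 0
          - x * ((n + 1) * iteratedDeriv n (raisedMehlerKernel x y) 0)) := by
  have hM := analyticAt_mehlerKernel x y
  have hT := analyticAt_raisedMehlerKernel x y
  have hwM : AnalyticAt ℂ (fun w => w * mehlerKernel x y w) 0 := by fun_prop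
  have hwM' : AnalyticAt ℂ (fun w => w * deriv (fun v => v * mehlerKernel x y v) w) 0 :=
    analyticAt_id.mul hwM.deriv
  have hyT : AnalyticAt ℂ (fun w => y * raisedMehlerKernel x y w) 0 := by fun_prop
  have hxwT : AnalyticAt ℂ (fun w => x * (w * raisedMehlerKernel x y w)) 0 := by fun_prop
  have relation : deriv (mehlerKernel x y) =ᶠ[nhds 0] fun w =>
      w * deriv (fun v => v * mehlerKernel x y v) w
        + (y * raisedMehlerKernel x y w - x * (w * raisedMehlerKernel x y w)) :=
    eventually_one_sub_sq_mem_slitPlane.mono fun w hw => deriv_mehlerKernel_eq x y hw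
  rw [iteratedDeriv_succ', relation.iteratedDeriv_eq,
    iteratedDeriv_fun_add hwM'.contDiffAt (hyT.fun_sub hxwT).contDiffAt,
    iteratedDeriv_fun_sub hyT.contDiffAt hxwT.contDiffAt,
    iteratedDeriv_const_mul_field, iteratedDeriv_const_mul_field,
    iteratedDeriv_succ_id_mul_zero hwM.deriv.contDiffAt,
    iteratedDeriv_succ_id_mul_zero hT.contDiffAt, ← iteratedDeriv_succ',
    iteratedDeriv_succ_id_mul_zero hM.contDiffAt]
  ring

lemma iteratedDeriv_mehlerKernel_and_raised (n : ℕ) : ∀ x y : ℂ,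
    iteratedDeriv n (mehlerKernel x y) 0 = Hpoly n x * Hpoly n y / 2 ^ n ∧
    iteratedDeriv (n + 1) (mehlerKernel x y) 0
      = Hpoly (n + 1) x * Hpoly (n + 1) y / 2 ^ (n + 1) ∧
    iteratedDeriv n (raisedMehlerKernel x y) 0 = Hpoly (n + 1) x * Hpoly n y / 2 ^ n := by
  induction n with
  | zero =>
    intro x y
    simp only [iteratedDeriv_zero, zero_add, iteratedDeriv_one, mehlerKernel_zero,
      deriv_mehlerKernel_zero, raisedMehlerKernel_zero, Hpoly_zero, Hpoly_one]
    exact ⟨by ring, by ring, by ring⟩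
  | succ n ih =>
    intro x y
    obtain ⟨hM, hM_succ, hT⟩ := ih x y
    obtain ⟨-, -, hT_swap⟩ := ih y x
    have hT_succ : iteratedDeriv (n + 1) (raisedMehlerKernel x y) 0
        = Hpoly (n + 2) x * Hpoly (n + 1) y / 2 ^ (n + 1) := by
      rw [iteratedDeriv_succ_raisedMehlerKernel, hM_succ, hT_swap, Hpoly_add_two n x]
      field_simp
      ring
    refine ⟨hM_succ, ?_, hT_succ⟩
    rw [iteratedDeriv_add_two_mehlerKernel, hM, hT, hT_succ, Hpoly_add_two n x, Hpoly_add_two n y]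
    field_simp
    ring

theorem hasSum_mehlerKernel (x y : ℂ) {w : ℂ} (hw : ‖w‖ < 1) :
    HasSum (fun n : ℕ => w ^ n / (2 ^ n * n.factorial) * (Hpoly n x * Hpoly n y))
      (mehlerKernel x y w) := by
  have taylor := hasSum_taylorSeries_on_ball (differentiableOn_mehlerKernel x y)
    (mem_ball_zero_iff.mpr hw)
  refine taylor.congr_fun fun n => ?_
  rw [(iteratedDeriv_mehlerKernel_and_raised n x y).1, smul_eq_mul, smul_eq_mul, sub_zero]
  field_simp

/-- The Hermite function `f_m`, extended from `ℝ` to an entire function on `ℂ`. -/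
noncomputable def hermiteFun (m : ℕ) (x : ℂ) : ℂ :=
  (1 / (√((2 : ℝ) ^ m * m.factorial * √Real.pi)) : ℂ) * exp (-x ^ 2 / 2) * Hpoly m x

/-- The value of the variable `w` at which Mehler's formula expands the kernel `B_s`. -/
noncomputable def mehlerParameter (s : ℝ) : ℝ := √((1 - s) / (1 + s))

/-- The factor relating Mehler's formula to the expansion of `B_s(x, z)`: the part of
`f_m(x) ψ^s_m(z)` that is not a term of the Mehler series. -/
noncomputable def mehlerPrefactor (s : ℝ) (x z : ℂ) : ℂ :=
  √((1 - s) / (Real.pi * √(s * Real.pi))) * exp (-(x ^ 2 + z ^ 2) / 2)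

section Parameter

variable {s : ℝ}

lemma mehlerParameter_nonneg (s : ℝ) : 0 ≤ mehlerParameter s := Real.sqrt_nonneg _

lemma mehlerParameter_sq (hs0 : 0 < s) (hs1 : s < 1) :
    mehlerParameter s ^ 2 = (1 - s) / (1 + s) :=
  Real.sq_sqrt (div_nonneg (by linarith) (by linarith))

lemma mehlerParameter_lt_one (hs0 : 0 < s) : mehlerParameter s < 1 := by
  rw [mehlerParameter, Real.sqrt_lt' one_pos, div_lt_iff₀ (by linarith)]
  linarith

lemma one_sub_mehlerParameter_sq (hs0 : 0 < s) (hs1 : s < 1) :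
    1 - mehlerParameter s ^ 2 = 2 * s / (1 + s) := by
  rw [mehlerParameter_sq hs0 hs1]
  field_simp
  ring

lemma sqrt_one_sub_sq_eq (hs0 : 0 < s) (hs1 : s < 1) :
    √(1 - s ^ 2) = mehlerParameter s * (1 + s) := by
  have hsq : (mehlerParameter s * (1 + s)) ^ 2 = 1 - s ^ 2 := by
    rw [mul_pow, mehlerParameter_sq hs0 hs1]
    field_simp
    ring
  rw [← hsq, Real.sqrt_sq (mul_nonneg (mehlerParameter_nonneg s) (by linarith))]

lemma one_sub_mehlerParameter_sq_cpow (hs0 : 0 < s) (hs1 : s < 1) :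
    (1 - (mehlerParameter s : ℂ) ^ 2) ^ (-1 / 2 : ℂ) = √((1 + s) / (2 * s)) := by
  have hbase : (1 - (mehlerParameter s : ℂ) ^ 2) = (2 * s / (1 + s) : ℝ) :=
    mod_cast one_sub_mehlerParameter_sq hs0 hs1
  have hexponent : (-1 / 2 : ℂ) = (-(1 / 2) : ℝ) := by norm_num
  rw [hbase, hexponent, ← ofReal_cpow (by positivity), Real.rpow_neg (by positivity),
    ← Real.sqrt_eq_rpow, ← Real.sqrt_inv, inv_div]

lemma hermiteFun_mul_psiS (hs0 : 0 < s) (hs1 : s < 1) (m : ℕ) (x z : ℂ) :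
    hermiteFun m x * psiS s m z = mehlerPrefactor s x z *
      ((mehlerParameter s : ℂ) ^ m / (2 ^ m * m.factorial) * (Hpoly m x * Hpoly m z)) := by
  have hratio : √(((1 - s) / (1 + s)) ^ m) = mehlerParameter s ^ m := by
    rw [← mehlerParameter_sq hs0 hs1, ← pow_mul, mul_comm 2 m, pow_mul,
      Real.sqrt_sq (pow_nonneg (mehlerParameter_nonneg s) m)]
  have hprefactor : √((1 - s) / (Real.pi * √(s * Real.pi)))
      = √((1 - s) / (Real.pi * √s)) / √√Real.pi := by
    rw [← Real.sqrt_div' _ (by positivity), Real.sqrt_mul hs0.le, div_div, mul_assoc]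
  have hfactorial : (√((2 : ℝ) ^ m * m.factorial) : ℂ) ^ 2 = 2 ^ m * m.factorial := by
    rw [← ofReal_pow, Real.sq_sqrt (by positivity)]
    push_cast
    ring
  have hexp : exp (-(x ^ 2 + z ^ 2) / 2) = exp (-x ^ 2 / 2) * exp (-z ^ 2 / 2) := by
    rw [← exp_add]
    ring_nf
  rw [hermiteFun, psiS, mehlerPrefactor, hexp, hprefactor, hratio, ← hfactorial,
    Real.sqrt_mul (by positivity) √Real.pi]
  push_cast
  ring

lemma Bker_eq_mehlerPrefactor_mul (hs0 : 0 < s) (hs1 : s < 1) (x z : ℂ) :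
    Bker s x z = mehlerPrefactor s x z * mehlerKernel x z (mehlerParameter s) := by
  have hconst : √((1 - s ^ 2) / (2 * Real.pi * s * √(s * Real.pi)))
      = √((1 - s) / (Real.pi * √(s * Real.pi))) * √((1 + s) / (2 * s)) := by
    rw [← Real.sqrt_mul' _ (by positivity), div_mul_div_comm]
    ring_nf
  have hs : (s : ℂ) ≠ 0 := mod_cast hs0.ne'
  have hs_add : (1 + s : ℂ) ≠ 0 := mod_cast (by linarith : 1 + s ≠ 0)
  have hw : (mehlerParameter s : ℂ) ^ 2 = (1 - s) / (1 + s) := mod_cast mehlerParameter_sq hs0 hs1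
  have hw_sub : 1 - (mehlerParameter s : ℂ) ^ 2 = 2 * s / (1 + s) :=
    mod_cast one_sub_mehlerParameter_sq hs0 hs1
  have hexponent : -x ^ 2 / (2 * s) - z ^ 2 / (2 * s) + ((√(1 - s ^ 2) / s : ℝ) : ℂ) * x * z
      = -(x ^ 2 + z ^ 2) / 2 + (2 * mehlerParameter s * (x * z)
        - (mehlerParameter s : ℂ) ^ 2 * (x ^ 2 + z ^ 2)) / (1 - (mehlerParameter s : ℂ) ^ 2) := by
    rw [sqrt_one_sub_sq_eq hs0 hs1, hw_sub, hw]
    push_cast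
    field_simp
    ring
  rw [Bker, mehlerPrefactor, mehlerKernel, one_sub_mehlerParameter_sq_cpow hs0 hs1, hconst,
    hexponent, exp_add]
  push_cast
  ring

end Parameter

theorem statement6_general (s : ℝ) (hs0 : 0 < s) (hs1 : s < 1) (x z : ℂ) :
    HasSum (fun m : ℕ => hermiteFun m x * psiS s m z) (Bker s x z) := by
  have norm_lt_one : ‖(mehlerParameter s : ℂ)‖ < 1 := by
    rw [Complex.norm_of_nonneg (mehlerParameter_nonneg s)]
    exact mehlerParameter_lt_one hs0
  simp only [hermiteFun_mul_psiS hs0 hs1, Bker_eq_mehlerPrefactor_mul hs0 hs1]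
  exact (hasSum_mehlerKernel x z norm_lt_one).mul_left (mehlerPrefactor s x z)

/-- Expansion of the Segal–Bargmann kernel: `B_s(t,z) = ∑ f_m(t) ψ^s_m(z)`. -/
theorem statement6 (s : ℝ) (hs0 : 0 < s) (hs1 : s < 1) (t : ℝ) (z : ℂ) :
    HasSum (fun m : ℕ => fHerm m t * psiS s m z) (Bker s (t : ℂ) z) :=
  statement6_general s hs0 hs1 t z
end
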